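/- arXiv:1903.09482 — 4 statements merged into one kernel-verified Lean document; each statement's English description precedes it below -/
import Mathlib

section
/- Let (P_k, F_k, S_k, T_k) be a known process model and (P_r, F_r, S_r, T_r) a ground truth process model with initial state s₀. Assume T_k ⊆ S_k × S_k and s₀ ∈ S_k. If there exists a forced state (a state s ∈ S_r \ S_k), then there exists a forced transition (a transition t ∈ T_r \ T_k). -/
/-- A process model `(P, F, S, T)`: a set `P` of variable assignments, a set `S` of
states, a surjective partial observation function `F : P ⇀ S` (encoded via `Option`),
and a transition relation `T ⊆ S × S`. -/
structure ProcessModel (V σ : Type*) where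
  P : Set V
  S : Set σ
  F : V → Option σ
  dom_sub : ∀ p s, F p = some s → p ∈ P
  range_sub : ∀ p s, F p = some s → s ∈ S
  surj : ∀ s ∈ S, ∃ p, F p = some s
  T : Set (σ × σ)
  T_sub : T ⊆ S ×ˢ S

/-- The projection of a longer assignment to its first `m` coordinates. -/
def proj {V : Type*} {m n : ℕ} (h : m ≤ n) (p : Fin n → V) : Fin m → V :=
  fun i => p (Fin.castLE h i)

/-- The known model `K` and ground truth model `R` are connected by inclusion and
projection: `P_k = P_k^1 × ⋯ × P_k^m`, `P_r = P_r^1 × ⋯ × P_r^n`, `m < n`, and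
`P_k^i ⊆ P_r^i` for the common coordinates. -/
structure Connection {V σ : Type*} {m n : ℕ}
    (K : ProcessModel (Fin m → V) σ) (R : ProcessModel (Fin n → V) σ) where
  hmn : m < n
  Pk : Fin m → Set V
  Pr : Fin n → Set V
  hPk : K.P = {p | ∀ i, p i ∈ Pk i}
  hPr : R.P = {p | ∀ i, p i ∈ Pr i}
  hsub : ∀ i : Fin m, Pk i ⊆ Pr (Fin.castLE hmn.le i)

/-- `p ∈ P_r` is observable in the known model iff `p ∈ dom π` (its projection lies
in `P_k`) and `π p ∈ dom F_k`. -/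
def Observable {V σ : Type*} {m n : ℕ} (K : ProcessModel (Fin m → V) σ)
    (h : m ≤ n) (p : Fin n → V) : Prop :=
  proj h p ∈ K.P ∧ ∃ s, K.F (proj h p) = some s

/-- `p` is correctly observed iff it is observable and `F_k (π p) = F_r p`. -/
def CorrectlyObserved {V σ : Type*} {m n : ℕ} (K : ProcessModel (Fin m → V) σ)
    (R : ProcessModel (Fin n → V) σ) (h : m ≤ n) (p : Fin n → V) : Prop :=
  Observable K h p ∧ K.F (proj h p) = R.F p

/-- A transition `(s_a, s_b) ∈ T_r` is an instance of Process Model Inconsistency iff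
some pair of variable assignments giving rise to it is unobservable or not correctly
observed in the known process model. -/
def PMI {V σ : Type*} {m n : ℕ} (K : ProcessModel (Fin m → V) σ)
    (R : ProcessModel (Fin n → V) σ) (h : m ≤ n) (sa sb : σ) : Prop :=
  ∃ pa pb : Fin n → V, R.F pa = some sa ∧ R.F pb = some sb ∧
    (¬ (Observable K h pa ∧ Observable K h pb) ∨
     ¬ (CorrectlyObserved K R h pa ∧ CorrectlyObserved K R h pb))

theorem forced_state_implies_forced_transition_general {σ : Type*}
    {Tk Tr : Set (σ × σ)} {Sk : Set σ} {s₀ s : σ}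
    (hTk : Set.MapsTo Prod.snd Tk Sk)
    (hreach : Relation.ReflTransGen (fun a b => (a, b) ∈ Tr) s₀ s)
    (hs₀ : s₀ ∈ Sk) (hs : s ∉ Sk) :
    ∃ b, (b, s) ∈ Tr \ Tk := by
  obtain rfl | ⟨b, -, hbs⟩ := hreach.cases_tail
  · exact absurd hs₀ hs
  · exact ⟨b, hbs, fun hbs_known => hs (hTk hbs_known)⟩

/-- If the ground truth model (with initial state `s₀ ∈ S_k`, from which
every state of `S_r` is reachable via `T_r`) has a forced state `s ∈ S_r \ S_k`,
then there is a forced transition `t ∈ T_r \ T_k`. -/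
theorem forced_state_implies_forced_transition {Vk Vr σ : Type*}
    (K : ProcessModel Vk σ) (R : ProcessModel Vr σ)
    (s₀ : σ) (hs₀r : s₀ ∈ R.S)
    (hreach : ∀ s ∈ R.S, Relation.ReflTransGen (fun a b => (a, b) ∈ R.T) s₀ s)
    (hTk : K.T ⊆ K.S ×ˢ K.S)
    (hs₀k : s₀ ∈ K.S)
    (hforced : ∃ s, s ∈ R.S \ K.S) :
    ∃ t, t ∈ R.T \ K.T := by
  obtain ⟨s, hsr, hsk⟩ := hforced
  obtain ⟨b, hbs⟩ := forced_state_implies_forced_transition_general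
    (fun _ ht => (hTk ht).2) (hreach s hsr) hs₀k hsk
  exact ⟨(b, s), hbs⟩
end

section
/- Let (P_k, F_k, S_k, T_k) be a known process model that is incomplete with respect to a ground truth process model (P_r, F_r, S_r, T_r) with initial state s₀, and assume the two models are connected by inclusion and projection, that T_k ⊆ S_k × S_k, and that s₀ ∈ S_k. Then either some transition in T_r is an instance of Process Model Inconsistency, or there exist a forced transition (s_a, s_b) ∈ T_r \ T_k and variable assignments p_a, p_b ∈ P_r with F_r(p_a) = s_a and F_r(p_b) = s_b such that the pair (p_a, p_b) is correctly observed in the known process model. -/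
namespace ProcessModel

variable {A B σ : Type*} {K : ProcessModel A σ} {R : ProcessModel B σ}

theorem exists_forced_transition_to_of_reachable {s₀ s : σ} (hs₀ : s₀ ∈ K.S)
    (hs : s ∉ K.S) (hreach : Relation.ReflTransGen (fun a b => (a, b) ∈ R.T) s₀ s) :
    ∃ a, (a, s) ∈ R.T \ K.T := by
  rcases hreach.cases_tail with rfl | ⟨a, -, has⟩
  · exact absurd hs₀ hs
  · exact ⟨a, has, fun hK => hs (K.T_sub hK).2⟩

theorem forced_transitions_nonempty {s₀ : σ} (hs₀ : s₀ ∈ K.S)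
    (hreach : ∀ s ∈ R.S, Relation.ReflTransGen (fun a b => (a, b) ∈ R.T) s₀ s)
    (hincomplete : (R.S \ K.S).Nonempty ∨ (R.T \ K.T).Nonempty) :
    (R.T \ K.T).Nonempty := by
  rcases hincomplete with ⟨s, hsR, hsK⟩ | hT
  · obtain ⟨a, ha⟩ := exists_forced_transition_to_of_reachable hs₀ hsK (hreach s hsR)
    exact ⟨(a, s), ha⟩
  · exact hT

theorem exists_assignments_of_mem_T {t : σ × σ} (ht : t ∈ R.T) :
    ∃ pa pb, R.F pa = some t.1 ∧ R.F pb = some t.2 := by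
  obtain ⟨pa, ha⟩ := R.surj t.1 (R.T_sub ht).1
  obtain ⟨pb, hb⟩ := R.surj t.2 (R.T_sub ht).2
  exact ⟨pa, pb, ha, hb⟩

end ProcessModel

section

variable {V σ : Type*} {m n : ℕ} {K : ProcessModel (Fin m → V) σ}
  {R : ProcessModel (Fin n → V) σ}

theorem not_pmi_iff {h : m ≤ n} {sa sb : σ} :
    ¬ PMI K R h sa sb ↔ ∀ pa pb, R.F pa = some sa → R.F pb = some sb →
      CorrectlyObserved K R h pa ∧ CorrectlyObserved K R h pb := by
  constructor
  · intro hPMI pa pb ha hb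
    by_contra hc
    exact hPMI ⟨pa, pb, ha, hb, Or.inr hc⟩
  · rintro hcorrect ⟨pa, pb, ha, hb, hbad⟩
    obtain ⟨hca, hcb⟩ := hcorrect pa pb ha hb
    exact hbad.elim (fun hobs => hobs ⟨hca.1, hcb.1⟩) (fun hc => hc ⟨hca, hcb⟩)

theorem detection_general (h : m ≤ n) {s₀ : σ} (hs₀ : s₀ ∈ K.S)
    (hreach : ∀ s ∈ R.S, Relation.ReflTransGen (fun a b => (a, b) ∈ R.T) s₀ s)
    (hincomplete : (R.S \ K.S).Nonempty ∨ (R.T \ K.T).Nonempty) :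
    ∃ t ∈ R.T \ K.T, PMI K R h t.1 t.2 ∨ ∃ pa pb, R.F pa = some t.1 ∧ R.F pb = some t.2 ∧
      CorrectlyObserved K R h pa ∧ CorrectlyObserved K R h pb := by
  obtain ⟨t, ht⟩ := ProcessModel.forced_transitions_nonempty hs₀ hreach hincomplete
  obtain ⟨pa, pb, ha, hb⟩ := ProcessModel.exists_assignments_of_mem_T ht.1
  refine ⟨t, ht, or_iff_not_imp_left.2 fun hPMI => ?_⟩
  exact ⟨pa, pb, ha, hb, not_pmi_iff.1 hPMI pa pb ha hb⟩

end

/-- Theorem: detection: If the known process model is incomplete with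
respect to a connected ground truth model (with initial state `s₀ ∈ S_k`), then
either some transition of `T_r` is an instance of PMI, or some forced transition
`(s_a, s_b) ∈ T_r \ T_k` arises from a pair of variable assignments that is
correctly observed in the known process model. -/
theorem detection {V σ : Type*} {m n : ℕ}
    (K : ProcessModel (Fin m → V) σ) (R : ProcessModel (Fin n → V) σ)
    (C : Connection K R)
    (s₀ : σ) (hs₀r : s₀ ∈ R.S)
    (hreach : ∀ s ∈ R.S, Relation.ReflTransGen (fun a b => (a, b) ∈ R.T) s₀ s)
    (hTk : K.T ⊆ K.S ×ˢ K.S)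
    (hs₀k : s₀ ∈ K.S)
    (hincomplete : (R.S \ K.S).Nonempty ∨ (R.T \ K.T).Nonempty) :
    (∃ t ∈ R.T, PMI K R C.hmn.le t.1 t.2) ∨
    (∃ t ∈ R.T \ K.T, ∃ pa pb : Fin n → V,
      R.F pa = some t.1 ∧ R.F pb = some t.2 ∧
      CorrectlyObserved K R C.hmn.le pa ∧ CorrectlyObserved K R C.hmn.le pb) := by
  obtain ⟨t, ht, hPMI | hobs⟩ := detection_general C.hmn.le hs₀k hreach hincomplete
  exacts [Or.inl ⟨t, ht.1, hPMI⟩, Or.inr ⟨t, ht, hobs⟩]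
end

section
/- Let (P_k, F_k, S_k, T_k) be a known process model and (P_r, F_r, S_r, T_r) a ground truth process model with initial state s₀. Assume T_k ⊆ S_k × S_k and s₀ ∈ S_k. If the known process model is incomplete (i.e., S_r \ S_k ≠ ∅ or T_r \ T_k ≠ ∅), then there exists a forced transition, i.e., some t ∈ T_r \ T_k. -/
theorem exists_mem_diff_of_reflTransGen {σ : Type*} {S : Set σ} {T U : Set (σ × σ)} {a b : σ}
    (hab : Relation.ReflTransGen (fun x y => (x, y) ∈ T) a b)
    (hU : Set.MapsTo Prod.snd U S) (ha : a ∈ S) (hb : b ∉ S) :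
    ∃ c, (c, b) ∈ T \ U := by
  have hne : b ≠ a := fun h => hb (h ▸ ha)
  obtain ⟨c, -, hcb⟩ := hab.cases_tail.resolve_left hne
  exact ⟨c, hcb, fun hcbU => hb (hU hcbU)⟩

theorem incomplete_implies_forced_transition_general {σ : Type*} {Sk Sr : Set σ}
    {Tk Tr : Set (σ × σ)} {s₀ : σ}
    (hreach : ∀ s ∈ Sr, Relation.ReflTransGen (fun a b => (a, b) ∈ Tr) s₀ s)
    (hTk : Set.MapsTo Prod.snd Tk Sk) (hs₀k : s₀ ∈ Sk)
    (hincomplete : (Sr \ Sk).Nonempty ∨ (Tr \ Tk).Nonempty) :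
    (Tr \ Tk).Nonempty := by
  rcases hincomplete with ⟨s, hsr, hsk⟩ | hforced
  · obtain ⟨c, hcs⟩ := exists_mem_diff_of_reflTransGen (hreach s hsr) hTk hs₀k hsk
    exact ⟨(c, s), hcs⟩
  · exact hforced

/-- If the known model is incomplete (`S_r \ S_k ≠ ∅` or `T_r \ T_k ≠ ∅`)
with respect to a ground truth model with initial state `s₀ ∈ S_k`, then there is a
forced transition `t ∈ T_r \ T_k`. -/
theorem incomplete_implies_forced_transition {Vk Vr σ : Type*}
    (K : ProcessModel Vk σ) (R : ProcessModel Vr σ)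
    (s₀ : σ) (hs₀r : s₀ ∈ R.S)
    (hreach : ∀ s ∈ R.S, Relation.ReflTransGen (fun a b => (a, b) ∈ R.T) s₀ s)
    (hTk : K.T ⊆ K.S ×ˢ K.S)
    (hs₀k : s₀ ∈ K.S)
    (hincomplete : (R.S \ K.S).Nonempty ∨ (R.T \ K.T).Nonempty) :
    ∃ t, t ∈ R.T \ K.T :=
  incomplete_implies_forced_transition_general hreach (fun _ ht => (hTk ht).2) hs₀k hincomplete
end

section
/- The converse of the detection theorem fails: there exist a known process model (P_k, F_k, S_k, T_k) and a ground truth process model (P_r, F_r, S_r, T_r) with initial state s₀ that are connected by inclusion and projection, such that the known model is both complete and correct (S_k = S_r and T_k = T_r), yet some transition in T_r is an instance of Process Model Inconsistency. -/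
/-! Two models that read the state off different variables can have the same states and the same
transitions. On an assignment where these variables disagree, the model with fewer variables
observes the wrong state. -/

/-- The process model whose states are the values of the single variable `i` and whose observation
function reads that variable. Its transition relation `T` is a parameter, so that models reading
different variables can share it. -/
def coordinateModel {V : Type*} {n : ℕ} (T : Set (V × V)) (i : Fin n) :
    ProcessModel (Fin n → V) V where
  P := Set.univ
  S := Set.univ
  F p := some (p i)
  dom_sub _ _ _ := Set.mem_univ _
  range_sub _ _ _ := Set.mem_univ _
  surj s _ := ⟨fun _ => s, rfl⟩
  T := T
  T_sub _ _ := ⟨Set.mem_univ _, Set.mem_univ _⟩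

/-- The connection by inclusion and projection between two coordinate models with `m < n` variables,
in which every variable ranges over the whole value type `V`. -/
def coordinateConnection {V : Type*} {m n : ℕ} (hmn : m < n) (Tk Tr : Set (V × V))
    (i : Fin m) (j : Fin n) : Connection (coordinateModel Tk i) (coordinateModel Tr j) where
  hmn := hmn
  Pk _ := Set.univ
  Pr _ := Set.univ
  hPk := by simp [coordinateModel]
  hPr := by simp [coordinateModel]
  hsub _ := subset_rfl

theorem PMI.of_not_correctlyObserved {V σ : Type*} {m n : ℕ} {K : ProcessModel (Fin m → V) σ}
    {R : ProcessModel (Fin n → V) σ} {h : m ≤ n} {pa pb : Fin n → V} {sa sb : σ}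
    (ha : R.F pa = some sa) (hb : R.F pb = some sb) (hpa : ¬ CorrectlyObserved K R h pa) :
    PMI K R h sa sb :=
  ⟨pa, pb, ha, hb, Or.inr fun hab => hpa hab.1⟩

section coordinateModel

variable {V : Type*} {m n : ℕ} {Tk Tr : Set (V × V)} {h : m ≤ n} {i : Fin m} {j : Fin n}

theorem correctlyObserved_coordinateModel_iff {p : Fin n → V} :
    CorrectlyObserved (coordinateModel Tk i) (coordinateModel Tr j) h p ↔
      p (Fin.castLE h i) = p j :=
  ⟨fun hp => Option.some_injective V hp.2,
    fun hp => ⟨⟨Set.mem_univ _, _, rfl⟩, congrArg some hp⟩⟩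

theorem pmi_coordinateModel [Nontrivial V] (hij : Fin.castLE h i ≠ j) (a b : V) :
    PMI (coordinateModel Tk i) (coordinateModel Tr j) h a b := by
  obtain ⟨c, hca⟩ := exists_ne a
  let p : Fin n → V := Function.update (fun _ => c) j a
  have hpi : p (Fin.castLE h i) = c := Function.update_of_ne hij _ _
  have hpj : p j = a := Function.update_self _ _ _
  have hp : ¬ CorrectlyObserved (coordinateModel Tk i) (coordinateModel Tr j) h p := by
    rwa [correctlyObserved_coordinateModel_iff, hpi, hpj]
  exact .of_not_correctlyObserved (congrArg some hpj) (pb := fun _ => b) rfl hp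

end coordinateModel

/-- The converse of the detection theorem fails: there are connected
known and ground truth process models such that the known model is complete and
correct (`S_k = S_r` and `T_k = T_r`), yet some transition of `T_r` is an instance
of PMI. -/
theorem converse_of_detection_fails :
    ∃ (V σ : Type) (m n : ℕ)
      (K : ProcessModel (Fin m → V) σ) (R : ProcessModel (Fin n → V) σ)
      (C : Connection K R) (s₀ : σ),
      s₀ ∈ R.S ∧
      (∀ s ∈ R.S, Relation.ReflTransGen (fun a b => (a, b) ∈ R.T) s₀ s) ∧
      K.S = R.S ∧ K.T = R.T ∧
      ∃ t ∈ R.T, PMI K R C.hmn.le t.1 t.2 := by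
  let T : Set (Bool × Bool) := Set.univ
  let C := coordinateConnection Nat.one_lt_two T T 0 1
  have reachable (s : Bool) : Relation.ReflTransGen (fun a b => (a, b) ∈ T) false s :=
    .single (Set.mem_univ _)
  have inconsistent : PMI (coordinateModel T 0) (coordinateModel T 1) C.hmn.le false false :=
    pmi_coordinateModel (by decide) false false
  exact ⟨Bool, Bool, 1, 2, coordinateModel T 0, coordinateModel T 1, C, false,
    Set.mem_univ _, fun s _ => reachable s, rfl, rfl,
    (false, false), Set.mem_univ _, inconsistent⟩
end
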